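/- arXiv:2012.07897 — 3 statements merged into one kernel-verified Lean document; each statement's English description precedes it below -/
import Mathlib

section
/- The variety of pairs of commuting upper-triangular $3\times 3$ matrices, i.e. the subscheme of affine 12-space cut out by the three commutation equations $X_{12}(Y_{11}-Y_{22}) = Y_{12}(X_{11}-X_{22})$, $X_{23}(Y_{22}-Y_{33}) = Y_{23}(X_{22}-X_{33})$, $X_{13}(Y_{11}-Y_{33}) - Y_{13}(X_{11}-X_{33}) = X_{12}Y_{23} - X_{23}Y_{12}$, has dimension 9. -/
/-! Modulo nine suitable linear forms, the three commutation relations become the squares of `X₁₂`,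
`X₂₃` and `X₁₁ - X₂₂`. Hence the coordinate ring of the commuting variety is integral over the
subalgebra generated by these forms, and its dimension exceeds that of the base ring by at most 9.
Conversely, a maximal ideal `m` of the base ring extends to the ideal of polynomials whose value at
the origin lies in `m`; its height is larger by 12, and by Krull's height theorem three relations
vanishing at the origin lower it by at most 3. -/

open MvPolynomial

section SquaresInSpan

variable {R A ι : Type*} [CommRing R] [CommRing A] [Algebra R A]

-- A repeated factor is a square, which `hx` trades for fewer factors.
lemma mul_prod_mem_span_range_prod {x : ι → A}
    (hx : ∀ i, x i ^ 2 ∈ Submodule.span R (insert 1 (Set.range x))) (t : Finset ι) (i : ι) :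
    x i * ∏ j ∈ t, x j ∈ Submodule.span R (Set.range fun u : Finset ι ↦ ∏ j ∈ u, x j) := by
  classical
  induction h : t.card using Nat.strong_induction_on generalizing t i with
  | _ n ih =>
    by_cases hi : i ∈ t
    · set M := Submodule.span R (Set.range fun u : Finset ι ↦ ∏ j ∈ u, x j)
      have hM : Submodule.span R (insert 1 (Set.range x)) ≤
          M.comap (LinearMap.mulRight R (∏ j ∈ t.erase i, x j)) := by
        rw [Submodule.span_le, Set.insert_subset_iff, Set.range_subset_iff]
        refine ⟨?_, fun j ↦ ?_⟩
        · simpa using Submodule.subset_span (Set.mem_range_self (t.erase i))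
        · exact ih _ (h ▸ Finset.card_erase_lt_of_mem hi) _ j rfl
      have hsq : x i * ∏ j ∈ t, x j = x i ^ 2 * ∏ j ∈ t.erase i, x j := by
        rw [← Finset.mul_prod_erase t x hi, sq, mul_assoc]
      exact hsq ▸ hM (hx i)
    · exact Submodule.subset_span ⟨insert i t, Finset.prod_insert hi⟩

lemma toSubmodule_adjoin_range_eq_span_range_prod {x : ι → A}
    (hx : ∀ i, x i ^ 2 ∈ Submodule.span R (insert 1 (Set.range x))) :
    (Algebra.adjoin R (Set.range x)).toSubmodule =
      Submodule.span R (Set.range fun t : Finset ι ↦ ∏ i ∈ t, x i) := by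
  apply le_antisymm
  · rw [Algebra.adjoin_eq_span, Submodule.span_le]
    intro y hy
    induction hy using Submonoid.closure_induction_left with
    | one => exact Submodule.subset_span ⟨∅, Finset.prod_empty⟩
    | mul_left a ha y _ ih =>
      obtain ⟨i, rfl⟩ := ha
      set M := Submodule.span R (Set.range fun t : Finset ι ↦ ∏ i ∈ t, x i)
      have hM : M ≤ M.comap (LinearMap.mulLeft R (x i)) :=
        Submodule.span_le.2 (Set.range_subset_iff.2 (mul_prod_mem_span_range_prod hx · i))
      exact hM ih
  · rw [Submodule.span_le]
    rintro _ ⟨t, rfl⟩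
    exact Subalgebra.prod_mem _ fun i _ ↦ Algebra.subset_adjoin ⟨i, rfl⟩

lemma isIntegral_of_sq_mem_span [Finite ι] {x : ι → A}
    (hx : ∀ i, x i ^ 2 ∈ Submodule.span R (insert 1 (Set.range x))) (i : ι) :
    IsIntegral R (x i) :=
  .of_mem_of_fg (Algebra.adjoin R (Set.range x))
    (toSubmodule_adjoin_range_eq_span_range_prod hx ▸ Submodule.fg_span (Set.finite_range _))
    _ (Algebra.subset_adjoin ⟨i, rfl⟩)

end SquaresInSpan

lemma isIntegral_of_surjective_aeval {R A σ : Type*} [CommRing R] [CommRing A] [Algebra R A]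
    {S : Subalgebra R A} {x : σ → A} (hsurj : Function.Surjective (aeval (R := R) x))
    (hx : ∀ i, IsIntegral S (x i)) : Algebra.IsIntegral S A where
  isIntegral a := by
    have hle : Algebra.adjoin R (Set.range x) ≤ (integralClosure S A).restrictScalars R :=
      Algebra.adjoin_le (Set.range_subset_iff.2 hx)
    rw [Algebra.adjoin_range_eq_range_aeval] at hle
    exact hle (hsurj a)

section KrullDim

lemma ringKrullDim_le_of_isIntegral {R A : Type*} [CommRing R] [CommRing A] [Algebra R A]
    [Algebra.IsIntegral R A] : ringKrullDim A ≤ ringKrullDim R :=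
  Order.krullDim_le_of_strictMono (PrimeSpectrum.comap (algebraMap R A))
    fun I J hIJ ↦ Ideal.IsIntegral.comap_lt_comap (I := I.asIdeal) (J := J.asIdeal) hIJ

lemma ringKrullDim_adjoin_range_le {R A ι : Type*} [CommRing R] [IsNoetherianRing R] [CommRing A]
    [Algebra R A] [Finite ι] (x : ι → A) :
    ringKrullDim (Algebra.adjoin R (Set.range x)) ≤ ringKrullDim R + Nat.card ι := by
  rw [Algebra.adjoin_range_eq_range_aeval, ← ringKrullDim_of_isNoetherianRing]
  exact ringKrullDim_le_of_surjective _ (aeval x).rangeRestrict_surjective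

lemma ringKrullDim_add_natCast_le {R : Type*} [CommRing R] {n : ℕ} {d : WithBot ℕ∞}
    (h : ∀ m : Ideal R, m.IsMaximal → m.height + n ≤ d) : ringKrullDim R + n ≤ d := by
  nontriviality R
  obtain ⟨m, hm⟩ := Ideal.exists_maximal R
  have hn : (n : WithBot ℕ∞) ≤ d := le_trans (by norm_cast; exact le_add_self) (h m hm)
  lift d to ℕ∞ using ne_bot_of_le_ne_bot (WithBot.natCast_ne_bot n) hn
  obtain ⟨c, rfl⟩ := exists_add_of_le (WithBot.coe_le_coe.1 hn)
  rw [add_comm (n : ℕ∞), WithBot.coe_add] at h ⊢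
  refine ENat.WithBot.add_le_add_natCast_right_iff.2 ?_
  exact (ringKrullDim_le_iff_isMaximal_height_le _).2 fun m hm ↦
    ENat.WithBot.add_le_add_natCast_right_iff.1 (h m hm)

lemma height_comap_polynomial_eval {R : Type*} [CommRing R] [IsNoetherianRing R] (r : R)
    (m : Ideal R) [m.IsMaximal] : (m.comap (Polynomial.evalRingHom r)).height = m.height + 1 := by
  let M := m.comap (Polynomial.evalRingHom r)
  have : M.IsMaximal := Ideal.comap_isMaximal_of_surjective _ fun a ↦ ⟨.C a, Polynomial.eval_C⟩
  have : M.LiesOver m := ⟨by ext a; simp [M, Ideal.mem_comap]⟩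
  exact Polynomial.height_eq_height_add_one m M

lemma height_comap_eval {R σ : Type*} [CommRing R] [IsNoetherianRing R] [Finite σ] (x : σ → R)
    (m : Ideal R) [m.IsMaximal] : (m.comap (eval x)).height = m.height + Nat.card σ := by
  induction σ using Finite.induction_empty_option with
  | @of_equiv σ τ e ih =>
    have heval : eval x = (eval (x ∘ e)).comp (renameEquiv R e.symm).toRingEquiv := by
      ext <;> simp
    rw [heval, ← Ideal.comap_comap, ← Nat.card_congr e, ← ih (x ∘ e)]
    exact (renameEquiv R e.symm).toRingEquiv.height_comap _
  | h_empty =>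
    have heval : eval x = (isEmptyRingEquiv R PEmpty : MvPolynomial PEmpty R →+* R) := by
      ext i
      · exact (eval_C i).trans ((isEmptyRingEquiv R PEmpty).apply_symm_apply i).symm
      · exact i.elim
    rw [heval, Nat.card_of_isEmpty, Nat.cast_zero, add_zero]
    exact (isEmptyRingEquiv R PEmpty).height_comap m
  | @h_option σ _ ih =>
    let ev := Polynomial.evalRingHom (C (σ := σ) (x none))
    have heval : eval x = ((eval (x ∘ some)).comp ev).comp (optionEquivLeft R σ).toRingEquiv := by
      ext i
      · simp [ev]
      · cases i <;> simp [ev]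
    have : (m.comap (eval (x ∘ some))).IsMaximal :=
      Ideal.comap_isMaximal_of_surjective _ fun r ↦ ⟨C r, eval_C r⟩
    calc (m.comap (eval x)).height = ((m.comap (eval (x ∘ some))).comap ev).height := by
          rw [heval, ← Ideal.comap_comap, ← Ideal.comap_comap]
          exact (optionEquivLeft R σ).toRingEquiv.height_comap _
      _ = m.height + Nat.card (Option σ) := by
          rw [height_comap_polynomial_eval, ih, Finite.card_option, Nat.cast_succ, add_assoc]

lemma ringKrullDim_add_card_le_ringKrullDim_quotient_span_add_encard {R σ : Type*} [CommRing R]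
    [IsNoetherianRing R] [Finite σ] (x : σ → R) {s : Set (MvPolynomial σ R)}
    (hs : ∀ f ∈ s, eval x f = 0) :
    ringKrullDim R + Nat.card σ ≤ ringKrullDim (MvPolynomial σ R ⧸ Ideal.span s) + s.encard := by
  refine ringKrullDim_add_natCast_le fun m hm ↦ ?_
  have hsm : s ⊆ m.comap (eval x) := fun f hf ↦ by simp [hs f hf]
  exact_mod_cast height_comap_eval x m ▸ Ideal.height_le_ringKrullDim_quotient_add_encard s hsm

end KrullDim

section CommutingTriangular

/-- The entries above the diagonal of `YX - XY` for the generic upper-triangular `3×3` matrices `X`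
and `Y` whose entries, read row by row, are the variables `0, …, 5` and `6, …, 11`. They cut out
the variety of commuting pairs. -/
def commutationRelations (R : Type*) [CommRing R] : Set (MvPolynomial (Fin 12) R) :=
  {X 1 * (X 6 - X 9) - X 7 * (X 0 - X 3),
   X 4 * (X 9 - X 11) - X 10 * (X 3 - X 5),
   X 2 * (X 6 - X 11) - X 8 * (X 0 - X 5) - (X 1 * X 10 - X 4 * X 7)}

lemma encard_commutationRelations_le (R : Type*) [CommRing R] :
    (commutationRelations R).encard ≤ 3 := by
  rw [commutationRelations]
  grw [Set.encard_insert_le, Set.encard_insert_le, Set.encard_singleton]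
  norm_num

/-- Linear forms in the entries of two upper-triangular matrices, numbered as in
`commutationRelations`, that give a Noether normalization of the commuting variety. They are
chosen so that on their common kernel, which has coordinates `x 1`, `x 4` and `x 0 - x 3`, the
commutation relations restrict to `x 1 ^ 2`, `x 4 ^ 2` and `(x 0 - x 3) ^ 2`. -/
def linearParameters {A : Type*} [CommRing A] (x : Fin 12 → A) : Fin 9 → A :=
  ![x 6 - x 9 - x 1, x 7, x 9 - x 11 - x 4, x 10, x 3 - x 5, x 2, x 8 + x 0 - x 3, x 5, x 11]

variable {R A : Type*} [CommRing R] [CommRing A] [Algebra R A] {x : Fin 12 → A}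

lemma sq_eq_of_commutationRelations (hx : ∀ f ∈ commutationRelations R, aeval x f = 0) :
    let l := linearParameters x
    x 1 ^ 2 = l 1 * (x 0 - x 3) - l 0 * x 1 ∧
    x 4 ^ 2 = l 3 * l 4 - l 2 * x 4 ∧
    (x 0 - x 3) ^ 2 = l 4 * l 6 - l 5 * (l 0 + l 2) + (l 3 - l 5) * x 1 -
      (l 1 + l 5) * x 4 + (l 6 - l 4) * (x 0 - x 3) := by
  obtain ⟨h₁₂, h₂₃, h₁₃⟩ : x 1 * (x 6 - x 9) - x 7 * (x 0 - x 3) = 0 ∧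
      x 4 * (x 9 - x 11) - x 10 * (x 3 - x 5) = 0 ∧
      x 2 * (x 6 - x 11) - x 8 * (x 0 - x 5) - (x 1 * x 10 - x 4 * x 7) = 0 := by
    simpa [commutationRelations] using hx
  simp only [linearParameters, Matrix.cons_val]
  refine ⟨?_, ?_, ?_⟩
  · linear_combination h₁₂
  · linear_combination h₂₃
  · linear_combination h₁₃

lemma isIntegral_of_linearParameters_mem {S : Subalgebra R A}
    (hl : ∀ i, linearParameters x i ∈ S) (hx : ∀ f ∈ commutationRelations R, aeval x f = 0) :
    IsIntegral S (x 1) ∧ IsIntegral S (x 4) ∧ IsIntegral S (x 0 - x 3) := by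
  obtain ⟨hsq₁₂, hsq₂₃, hsq₁₁⟩ := sq_eq_of_commutationRelations hx
  set l := linearParameters x
  let u : Fin 3 → A := ![x 1, x 4, x 0 - x 3]
  let M := Submodule.span S (insert 1 (Set.range u))
  have hconst {c : A} (hc : c ∈ S) : c ∈ M := by
    simpa [Subalgebra.smul_def] using M.smul_mem ⟨c, hc⟩ (Submodule.subset_span (.inl rfl))
  have hmul {c : A} (hc : c ∈ S) (i : Fin 3) : c * u i ∈ M :=
    M.smul_mem ⟨c, hc⟩ (Submodule.subset_span (.inr ⟨i, rfl⟩))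
  have hsq (i : Fin 3) : u i ^ 2 ∈ M := by
    fin_cases i
    · exact hsq₁₂ ▸ sub_mem (hmul (hl 1) 2) (hmul (hl 0) 0)
    · exact hsq₂₃ ▸ sub_mem (hconst (mul_mem (hl 3) (hl 4))) (hmul (hl 2) 1)
    · have hc : l 4 * l 6 - l 5 * (l 0 + l 2) ∈ S :=
        sub_mem (mul_mem (hl 4) (hl 6)) (mul_mem (hl 5) (add_mem (hl 0) (hl 2)))
      exact hsq₁₁ ▸ add_mem (sub_mem (add_mem (hconst hc) (hmul (sub_mem (hl 3) (hl 5)) 0))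
        (hmul (add_mem (hl 1) (hl 5)) 1)) (hmul (sub_mem (hl 6) (hl 4)) 2)
  exact ⟨isIntegral_of_sq_mem_span hsq 0, isIntegral_of_sq_mem_span hsq 1,
    isIntegral_of_sq_mem_span hsq 2⟩

lemma isIntegral_adjoin_linearParameters (hx : ∀ f ∈ commutationRelations R, aeval x f = 0)
    (i : Fin 12) : IsIntegral (Algebra.adjoin R (Set.range (linearParameters x))) (x i) := by
  set S := Algebra.adjoin R (Set.range (linearParameters x))
  have hl (j : Fin 9) : linearParameters x j ∈ S := Algebra.subset_adjoin ⟨j, rfl⟩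
  have hl_int (j : Fin 9) : IsIntegral S (linearParameters x j) :=
    isIntegral_algebraMap (x := (⟨_, hl j⟩ : S))
  obtain ⟨h1, h4, h03⟩ := isIntegral_of_linearParameters_mem hl hx
  have h3 : IsIntegral S (x 3) := by simpa [linearParameters] using (hl_int 4).add (hl_int 7)
  have h0 : IsIntegral S (x 0) := by simpa using h03.add h3
  have h8 : IsIntegral S (x 8) := by
    simpa [linearParameters, ← add_sub] using (hl_int 6).sub h03
  have h9 : IsIntegral S (x 9) := by
    simpa [linearParameters] using ((hl_int 2).add h4).add (hl_int 8)
  have h6 : IsIntegral S (x 6) := by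
    simpa [linearParameters] using ((hl_int 0).add h1).add h9
  fin_cases i
  exacts [h0, h1, hl_int 5, h3, h4, hl_int 7, h6, hl_int 1, h8, h9, hl_int 3, hl_int 8]

lemma ringKrullDim_le_of_commutationRelations [IsNoetherianRing R]
    (hsurj : Function.Surjective (aeval (R := R) x))
    (hx : ∀ f ∈ commutationRelations R, aeval x f = 0) :
    ringKrullDim A ≤ ringKrullDim R + 9 := by
  have := isIntegral_of_surjective_aeval hsurj (isIntegral_adjoin_linearParameters hx)
  calc ringKrullDim A
      ≤ ringKrullDim (Algebra.adjoin R (Set.range (linearParameters x))) :=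
        ringKrullDim_le_of_isIntegral
    _ ≤ ringKrullDim R + 9 := by
        simpa using ringKrullDim_adjoin_range_le (R := R) (linearParameters x)

end CommutingTriangular

theorem flag_xyz_dimension_nine_general {R : Type*} [CommRing R] [IsNoetherianRing R] :
    ringKrullDim (MvPolynomial (Fin 12) R ⧸ Ideal.span (commutationRelations R)) =
      ringKrullDim R + 9 := by
  let I := Ideal.span (commutationRelations R)
  apply le_antisymm
  · have hmk : aeval (fun i ↦ Ideal.Quotient.mk I (X i)) = Ideal.Quotient.mkₐ R I :=
      (aeval_unique (Ideal.Quotient.mkₐ R I)).symm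
    exact ringKrullDim_le_of_commutationRelations (hmk ▸ Ideal.Quotient.mkₐ_surjective R I)
      fun f hf ↦ hmk ▸ Ideal.Quotient.eq_zero_iff_mem.2 (Ideal.subset_span hf)
  · have hzero : ∀ f ∈ commutationRelations R, eval 0 f = 0 := by
      rintro f (rfl | rfl | rfl) <;> simp
    refine (ENat.WithBot.add_le_add_natCast_right_iff (c := 3)).1 ?_
    calc ringKrullDim R + 9 + (3 : ℕ) = ringKrullDim R + Nat.card (Fin 12) := by
          rw [add_assoc, Nat.card_fin]; norm_num
      _ ≤ ringKrullDim (MvPolynomial (Fin 12) R ⧸ I) + (commutationRelations R).encard :=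
          ringKrullDim_add_card_le_ringKrullDim_quotient_span_add_encard 0 hzero
      _ ≤ ringKrullDim (MvPolynomial (Fin 12) R ⧸ I) + (3 : ℕ) := by
          gcongr
          exact WithBot.coe_le_coe.2 (encard_commutationRelations_le R)

/-- The variety of pairs of commuting upper-triangular `3×3` matrices has dimension 9.
Variables `0,…,5` are `X₁₁,X₁₂,X₁₃,X₂₂,X₂₃,X₃₃` and `6,…,11` are
`Y₁₁,Y₁₂,Y₁₃,Y₂₂,Y₂₃,Y₃₃`. -/
theorem flag_xyz_dimension_nine {k : Type*} [Field k] [IsAlgClosed k] :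
    ringKrullDim (MvPolynomial (Fin 12) k ⧸
      Ideal.span ({X 1 * (X 6 - X 9) - X 7 * (X 0 - X 3),
                   X 4 * (X 9 - X 11) - X 10 * (X 3 - X 5),
                   X 2 * (X 6 - X 11) - X 8 * (X 0 - X 5) - (X 1 * X 10 - X 4 * X 7)} :
        Set (MvPolynomial (Fin 12) k))) = 9 :=
  flag_xyz_dimension_nine_general.trans (by simp)
end

section
/- The ring $R = k[x_1,x_2,x_3,y_1,y_2,y_3]/(x_1y_2-x_2y_1,\; x_2y_3-x_3y_2,\; x_3y_1-x_1y_3)$ has Krull dimension 4. -/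
open MvPolynomial

/-!
Write `R` for the quotient of `A[x₁, …, xₙ, y₁, …, yₙ]` by the `2 × 2` minors of the matrix with
rows `x` and `y`.

Upper bound: put `x_{n+1} = y₀ = 0` and let `S ⊆ R` be generated by the `n + 1` differences
`θⱼ = xⱼ - yⱼ₋₁`. The minors give
`xᵢ xⱼ = θⱼ xᵢ + xᵢ yⱼ₋₁ = θⱼ xᵢ + xⱼ₋₁ yᵢ = θⱼ xᵢ - θᵢ₊₁ xⱼ₋₁ + xⱼ₋₁ xᵢ₊₁`,
so by descent on `j` the `S`-span of `1, x₁, …, xₙ` is a ring. Hence `R` is integral over `S`, and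
`dim R ≤ dim S ≤ dim A + n + 1`.

Lower bound: `xᵢ ↦ xᵢ`, `yᵢ ↦ t xᵢ` maps `R` onto a subring of `A[x₁, …, xₙ][t]` (the Rees algebra
of the ideal `(x₁, …, xₙ)`). Setting `t = 0` maps this subring onto `A[x₁, …, xₙ]` and kills the
nonzerodivisor `t x₁`, so its dimension is at least `dim A + n + 1`.
-/

section Integral

variable {A B : Type*} [CommRing A] [CommRing B] [Algebra A B]

lemma ringKrullDim_le_of_isIntegral_s4 [Algebra.IsIntegral A B] :
    ringKrullDim B ≤ ringKrullDim A :=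
  Order.krullDim_le_of_strictMono (PrimeSpectrum.comap (algebraMap A B)) fun _ _ hlt ↦
    Ideal.IsIntegral.comap_lt_comap hlt

lemma ringKrullDim_le_add_natCard_of_isIntegral_adjoin_range [IsNoetherianRing A]
    {ι : Type*} [Finite ι] (θ : ι → B) [Algebra.IsIntegral (Algebra.adjoin A (Set.range θ)) B] :
    ringKrullDim B ≤ ringKrullDim A + Nat.card ι :=
  calc ringKrullDim B
    _ ≤ ringKrullDim (Algebra.adjoin A (Set.range θ)) := ringKrullDim_le_of_isIntegral_s4
    _ = ringKrullDim (aeval (R := A) θ).range := by rw [Algebra.adjoin_range_eq_range_aeval]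
    _ ≤ ringKrullDim (MvPolynomial ι A) :=
      ringKrullDim_le_of_surjective _ (aeval (R := A) θ).rangeRestrict_surjective
    _ = ringKrullDim A + Nat.card ι := MvPolynomial.ringKrullDim_of_isNoetherianRing

lemma isIntegral_of_mul_mem_span_insert_one {s : Set B} (hs : s.Finite)
    (hmul : ∀ a ∈ s, ∀ b ∈ s, a * b ∈ Submodule.span A (insert 1 s)) {b : B} (hb : b ∈ s) :
    IsIntegral A b := by
  let M := Submodule.span A (insert 1 s)
  have mem_M {c : B} (hc : c ∈ insert 1 s) : c ∈ M := Submodule.subset_span hc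
  have hMM : M * M ≤ M := by
    rw [Submodule.span_mul_span, Submodule.span_le]
    rintro _ ⟨a, rfl | ha, c, rfl | hc, rfl⟩
    · simpa using mem_M (.inl rfl)
    · simpa using mem_M (.inr hc)
    · simpa using mem_M (.inr ha)
    · exact hmul a ha c hc
  let T := M.toSubalgebra (mem_M (.inl rfl)) fun _ _ ha hc ↦ hMM (Submodule.mul_mem_mul ha hc)
  exact .of_mem_of_fg T (Submodule.fg_span (hs.insert 1)) b (mem_M (.inr hb))

end Integral

section UpperBound

variable {B : Type*} [CommRing B] {n : ℕ}

/-- The `n + 1` differences `xⱼ - yⱼ₋₁` along the antidiagonals of the matrix with rows `x` and `y`,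
where entries outside the matrix count as `0`. They are the parameters over which the ring of
`2 × 2` minors is integral. -/
def antidiagonalDiff (x y : Fin n → B) (j : Fin (n + 1)) : B :=
  Fin.snoc (α := fun _ ↦ B) x 0 j - Fin.cons (α := fun _ ↦ B) 0 y j

lemma antidiagonalDiff_castSucc (x y : Fin n → B) (j : Fin n) :
    antidiagonalDiff x y j.castSucc = x j - Fin.cons (α := fun _ ↦ B) 0 y j.castSucc := by
  simp [antidiagonalDiff]

lemma antidiagonalDiff_succ (x y : Fin n → B) (j : Fin n) :
    antidiagonalDiff x y j.succ = Fin.snoc (α := fun _ ↦ B) x 0 j.succ - y j := by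
  simp [antidiagonalDiff]

variable {S : Type*} [CommRing S] [Algebra S B] {x y : Fin n → B}

lemma mul_mem_span_of_antidiagonalDiff_mem_range
    (hxy : ∀ i j, x i * y j = x j * y i)
    (hθ : ∀ j, antidiagonalDiff x y j ∈ (algebraMap S B).range) (i j : Fin n) :
    x i * x j ∈ Submodule.span S (insert 1 (Set.range x)) := by
  let M := Submodule.span S (insert 1 (Set.range x))
  let x' : Fin (n + 1) → B := Fin.snoc x 0
  let y' : Fin (n + 1) → B := Fin.cons 0 y
  have mul_diff_mem (i : Fin n) (j : Fin (n + 1)) : x i * antidiagonalDiff x y j ∈ M := by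
    obtain ⟨s, hs⟩ := hθ j
    rw [← hs, mul_comm, ← Algebra.smul_def]
    exact M.smul_mem s (Submodule.subset_span (.inr ⟨i, rfl⟩))
  have mul_x_mem {j : Fin n} (h : ∀ i, x i * y' j.castSucc ∈ M) (i : Fin n) : x i * x j ∈ M := by
    have hsplit : x i * x j = x i * antidiagonalDiff x y j.castSucc + x i * y' j.castSucc := by
      rw [antidiagonalDiff_castSucc]; ring
    exact hsplit ▸ add_mem (mul_diff_mem i _) (h i)
  have mul_y'_mem (k : Fin (n + 1)) : ∀ i, x i * y' k ∈ M := by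
    induction k using Fin.induction with
    | zero => simp [y']
    | succ j ih =>
      intro i
      have hx' : x j * x' i.succ ∈ M := by
        cases i.succ using Fin.lastCases with
        | last => simp [x']
        | cast l => simpa [x', mul_comm] using mul_x_mem ih l
      have hsplit : x i * y' j.succ = x j * x' i.succ - x j * antidiagonalDiff x y i.succ := by
        rw [antidiagonalDiff_succ, show y' j.succ = y j from rfl, hxy]; ring
      exact hsplit ▸ sub_mem hx' (mul_diff_mem j _)
  exact mul_x_mem (mul_y'_mem _) i

lemma isIntegral_entries_of_antidiagonalDiff_mem_range
    (hxy : ∀ i j, x i * y j = x j * y i)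
    (hθ : ∀ j, antidiagonalDiff x y j ∈ (algebraMap S B).range) (i : Fin n) :
    IsIntegral S (x i) ∧ IsIntegral S (y i) := by
  have hx (i : Fin n) : IsIntegral S (x i) := by
    refine isIntegral_of_mul_mem_span_insert_one (Set.finite_range x) ?_ ⟨i, rfl⟩
    rintro _ ⟨i, rfl⟩ _ ⟨j, rfl⟩
    exact mul_mem_span_of_antidiagonalDiff_mem_range hxy hθ i j
  have hx' (j : Fin (n + 1)) : IsIntegral S (Fin.snoc (α := fun _ ↦ B) x 0 j) := by
    cases j using Fin.lastCases with
    | last => simpa using isIntegral_zero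
    | cast j => simpa using hx j
  obtain ⟨s, hs⟩ := hθ i.succ
  have hy : y i = Fin.snoc (α := fun _ ↦ B) x 0 i.succ - algebraMap S B s := by
    rw [hs, antidiagonalDiff_succ, sub_sub_cancel]
  exact ⟨hx i, hy ▸ (hx' i.succ).sub isIntegral_algebraMap⟩

theorem ringKrullDim_le_of_adjoin_rows_eq_top {A : Type*} [CommRing A] [IsNoetherianRing A]
    [Algebra A B] (hgen : Algebra.adjoin A (Set.range x ∪ Set.range y) = ⊤)
    (hxy : ∀ i j, x i * y j = x j * y i) :
    ringKrullDim B ≤ ringKrullDim A + (n + 1 : ℕ) := by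
  let S := Algebra.adjoin A (Set.range (antidiagonalDiff x y))
  have hθ (j : Fin (n + 1)) : antidiagonalDiff x y j ∈ (algebraMap S B).range :=
    ⟨⟨_, Algebra.subset_adjoin ⟨j, rfl⟩⟩, rfl⟩
  have hint := isIntegral_entries_of_antidiagonalDiff_mem_range hxy hθ
  have hle : Algebra.adjoin A (Set.range x ∪ Set.range y) ≤
      (integralClosure S B).restrictScalars A := by
    rw [Algebra.adjoin_le_iff]
    rintro _ (⟨i, rfl⟩ | ⟨i, rfl⟩)
    exacts [(hint i).1, (hint i).2]
  have : Algebra.IsIntegral S B := ⟨fun b ↦ hle (hgen ▸ Algebra.mem_top)⟩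
  simpa using ringKrullDim_le_add_natCard_of_isIntegral_adjoin_range (A := A)
    (antidiagonalDiff x y)

end UpperBound

section LowerBound

open scoped Polynomial

variable {R : Type*} [CommRing R] {r : R}

lemma ringKrullDim_add_one_le_of_subring_polynomial (S : Subring R[X])
    (hC : ∀ a, Polynomial.C a ∈ S) (hr : r ∈ nonZeroDivisors R)
    (hXr : Polynomial.X * Polynomial.C r ∈ S) :
    ringKrullDim R + 1 ≤ ringKrullDim S := by
  have hXr_reg : Polynomial.X * Polynomial.C r ∈ nonZeroDivisors R[X] :=
    Polynomial.mem_nonzeroDivisors_of_coeff_mem 1 (by simpa using hr)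
  exact ringKrullDim_succ_le_of_surjective (Polynomial.constantCoeff.comp S.subtype)
    (fun a ↦ ⟨⟨Polynomial.C a, hC a⟩, by simp⟩) (r := ⟨_, hXr⟩)
    (mem_nonZeroDivisors_of_injective S.subtype_injective hXr_reg) (by simp)

end LowerBound

section MinorsIdeal

variable {ι R : Type*} [CommRing R]

/-- The ideal generated by the `2 × 2` minors of the matrix with rows `x` and `y`. All ordered pairs
of columns are used, so each minor occurs with both signs. -/
def minorsIdeal (x y : ι → R) : Ideal R :=
  Ideal.span (Set.range fun p : ι × ι ↦ x p.1 * y p.2 - x p.2 * y p.1)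

lemma minor_mem_minorsIdeal (x y : ι → R) (i j : ι) :
    x i * y j - x j * y i ∈ minorsIdeal x y :=
  Ideal.subset_span ⟨(i, j), rfl⟩

lemma minorsIdeal_le_iff {x y : ι → R} {I : Ideal R} :
    minorsIdeal x y ≤ I ↔ ∀ i j, x i * y j - x j * y i ∈ I := by
  simp [minorsIdeal, Ideal.span_le, Set.range_subset_iff]

lemma minorsIdeal_fin_three (x y : Fin 3 → R) :
    minorsIdeal x y =
      Ideal.span {x 0 * y 1 - x 1 * y 0, x 1 * y 2 - x 2 * y 1, x 2 * y 0 - x 0 * y 2} := by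
  apply le_antisymm
  · set I := Ideal.span {x 0 * y 1 - x 1 * y 0, x 1 * y 2 - x 2 * y 1, x 2 * y 0 - x 0 * y 2}
    have h01 : x 0 * y 1 - x 1 * y 0 ∈ I := Ideal.subset_span (by simp)
    have h12 : x 1 * y 2 - x 2 * y 1 ∈ I := Ideal.subset_span (by simp)
    have h20 : x 2 * y 0 - x 0 * y 2 ∈ I := Ideal.subset_span (by simp)
    have swap {i j : Fin 3} (h : x i * y j - x j * y i ∈ I) : x j * y i - x i * y j ∈ I :=
      neg_sub (x i * y j) _ ▸ neg_mem h
    simp [minorsIdeal_le_iff, Fin.forall_fin_succ, h01, h12, h20, swap h01, swap h12, swap h20]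
  · rw [Ideal.span_le]
    rintro _ (rfl | rfl | rfl)
    all_goals exact minor_mem_minorsIdeal x y _ _

end MinorsIdeal

section Generic

open scoped Polynomial

variable (A : Type*) [CommRing A] (n : ℕ)

/-- The ideal of `2 × 2` minors of the generic `2 × n` matrix over `A`. The first `n` variables are
its first row, the last `n` variables its second row. -/
noncomputable def genericMinorsIdeal : Ideal (MvPolynomial (Fin (n + n)) A) :=
  minorsIdeal (fun i ↦ X (Fin.castAdd n i)) (fun i ↦ X (Fin.natAdd n i))

lemma genericMinorsIdeal_three :
    genericMinorsIdeal A 3 =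
      Ideal.span ({X 0 * X 4 - X 1 * X 3, X 1 * X 5 - X 2 * X 4, X 2 * X 3 - X 0 * X 5} :
        Set (MvPolynomial (Fin 6) A)) :=
  minorsIdeal_fin_three _ _

variable {A n} in
lemma adjoin_rows_eq_top_of_surjective {B : Type*} [Semiring B] [Algebra A B]
    {π : MvPolynomial (Fin (n + n)) A →ₐ[A] B} (hπ : Function.Surjective π) :
    Algebra.adjoin A ((Set.range fun i ↦ π (X (Fin.castAdd n i))) ∪
      Set.range fun i ↦ π (X (Fin.natAdd n i))) = ⊤ := by
  rw [eq_top_iff, ← (AlgHom.range_eq_top π).2 hπ, ← Algebra.map_top, ← adjoin_range_X,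
    AlgHom.map_adjoin]
  apply Algebra.adjoin_mono
  rintro _ ⟨_, ⟨i, rfl⟩, rfl⟩
  cases i using Fin.addCases with
  | left i => exact .inl ⟨i, rfl⟩
  | right i => exact .inr ⟨i, rfl⟩

/-- The map `A[x₁, …, xₙ, y₁, …, yₙ] → A[x₁, …, xₙ][t]` with `xᵢ ↦ xᵢ` and `yᵢ ↦ t xᵢ`, whose
image is the Rees algebra of the ideal `(x₁, …, xₙ)`. -/
noncomputable def reesMap : MvPolynomial (Fin (n + n)) A →ₐ[A] (MvPolynomial (Fin n) A)[X] :=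
  aeval (Fin.append (fun i ↦ Polynomial.C (X i)) fun i ↦ Polynomial.X * Polynomial.C (X i))

variable {A n}

lemma reesMap_X_castAdd (i : Fin n) : reesMap A n (X (Fin.castAdd n i)) = Polynomial.C (X i) := by
  simp [reesMap]

lemma reesMap_X_natAdd (i : Fin n) :
    reesMap A n (X (Fin.natAdd n i)) = Polynomial.X * Polynomial.C (X i) := by
  rw [reesMap, aeval_X, Fin.append_right]

variable (A n)

lemma genericMinorsIdeal_le_ker_reesMap :
    genericMinorsIdeal A n ≤ RingHom.ker (reesMap A n).toRingHom := by
  refine minorsIdeal_le_iff.2 fun i j ↦ ?_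
  rw [RingHom.mem_ker, AlgHom.toRingHom_eq_coe, RingHom.coe_coe]
  simp only [map_sub, map_mul, reesMap_X_castAdd, reesMap_X_natAdd]
  ring

lemma C_mem_range_reesMap (p : MvPolynomial (Fin n) A) :
    Polynomial.C p ∈ (reesMap A n).range := by
  have hle : Algebra.adjoin A (Set.range X) ≤ (reesMap A n).range.comap Polynomial.CAlgHom := by
    rw [Algebra.adjoin_le_iff]
    rintro _ ⟨i, rfl⟩
    exact ⟨X (Fin.castAdd n i), reesMap_X_castAdd i⟩
  exact hle (adjoin_range_X (R := A) ▸ Algebra.mem_top)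

theorem le_ringKrullDim_quotient_genericMinorsIdeal [NeZero n] :
    ringKrullDim A + (n + 1 : ℕ) ≤
      ringKrullDim (MvPolynomial (Fin (n + n)) A ⧸ genericMinorsIdeal A n) := by
  let ρ := (reesMap A n).toRingHom
  calc ringKrullDim A + (n + 1 : ℕ)
    _ = ringKrullDim A + Nat.card (Fin n) + 1 := by simp [add_assoc]
    _ ≤ ringKrullDim (MvPolynomial (Fin n) A) + 1 := by
      gcongr
      exact ringKrullDim_add_natCard_le_ringKrullDim_mvPolynomial (Fin n)
    _ ≤ ringKrullDim ρ.range :=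
      ringKrullDim_add_one_le_of_subring_polynomial ρ.range (C_mem_range_reesMap A n)
        isRegular_X.mem_nonZeroDivisors ⟨X (Fin.natAdd n 0), reesMap_X_natAdd 0⟩
    _ = ringKrullDim (MvPolynomial (Fin (n + n)) A ⧸ RingHom.ker ρ) :=
      (ringKrullDim_eq_of_ringEquiv ρ.quotientKerEquivRange).symm
    _ ≤ ringKrullDim (MvPolynomial (Fin (n + n)) A ⧸ genericMinorsIdeal A n) :=
      ringKrullDim_le_of_surjective _
        (Ideal.Quotient.factor_surjective (genericMinorsIdeal_le_ker_reesMap A n))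

variable [IsNoetherianRing A]

theorem ringKrullDim_quotient_genericMinorsIdeal_le :
    ringKrullDim (MvPolynomial (Fin (n + n)) A ⧸ genericMinorsIdeal A n) ≤
      ringKrullDim A + (n + 1 : ℕ) := by
  let π := Ideal.Quotient.mkₐ A (genericMinorsIdeal A n)
  have hgen := adjoin_rows_eq_top_of_surjective (π := π) (Ideal.Quotient.mkₐ_surjective _ _)
  refine ringKrullDim_le_of_adjoin_rows_eq_top hgen fun i j ↦ ?_
  rw [← map_mul, ← map_mul]
  exact Ideal.Quotient.eq.2 (minor_mem_minorsIdeal _ _ i j)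

theorem minors_ring_dimension_four_general [NeZero n] :
    ringKrullDim (MvPolynomial (Fin (n + n)) A ⧸ genericMinorsIdeal A n) =
      ringKrullDim A + (n + 1 : ℕ) :=
  (ringKrullDim_quotient_genericMinorsIdeal_le A n).antisymm
    (le_ringKrullDim_quotient_genericMinorsIdeal A n)

end Generic

/-- `k[x₁,x₂,x₃,y₁,y₂,y₃]/(x₁y₂-x₂y₁, x₂y₃-x₃y₂, x₃y₁-x₁y₃)` has Krull dimension 4.
Variables `0,1,2` are `x₁,x₂,x₃` and `3,4,5` are `y₁,y₂,y₃`. -/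
theorem minors_ring_dimension_four {k : Type*} [Field k] :
    ringKrullDim (MvPolynomial (Fin 6) k ⧸
      Ideal.span ({X 0 * X 4 - X 1 * X 3,
                   X 1 * X 5 - X 2 * X 4,
                   X 2 * X 3 - X 0 * X 5} : Set (MvPolynomial (Fin 6) k))) = 4 := by
  rw [← genericMinorsIdeal_three]
  simpa using minors_ring_dimension_four_general k 3
end

section
/- The ring $R = k[x_1,x_2,x_3,y_1,y_2,y_3]/(x_1y_2-x_2y_1,\; x_2y_3-x_3y_2,\; x_3y_1-x_1y_3)$ is Cohen-Macaulay. -/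
open MvPolynomial

/-- A Noetherian local ring is Cohen-Macaulay if it admits a regular sequence in the
maximal ideal whose length equals the Krull dimension (depth = dimension). -/
def IsCohenMacaulayLocalRing (R : Type*) [CommRing R] [IsLocalRing R] : Prop :=
  IsNoetherianRing R ∧ ∃ rs : List R, (∀ r ∈ rs, r ∈ IsLocalRing.maximalIdeal R) ∧
    RingTheory.Sequence.IsRegular R rs ∧ ringKrullDim R = rs.length

/-- A Noetherian ring is Cohen-Macaulay if all its localizations at primes are
Cohen-Macaulay local rings. -/
def IsCohenMacaulayRing (R : Type*) [CommRing R] : Prop :=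
  IsNoetherianRing R ∧ ∀ P : Ideal R, ∀ _ : P.IsPrime,
    IsCohenMacaulayLocalRing (Localization.AtPrime P)

/-!
The multiplication table of the Delone-Faddeev cubic ring of `a x³ + b x² y + c x y² + d y³` says
precisely that the matrix with rows `(a, b + ω, θ)` and `(ω, θ - c, -d)` has vanishing
`2 × 2` minors. Hence the determinantal ring over `A` is the cubic ring of the generic form: it is
free of rank three over the polynomial ring `A[a, b, c, d]`.

A Noetherian local ring is Cohen-Macaulay exactly when its maximal ideal is the radical of an ideal
generated by a weakly regular sequence. Flat maps preserve weakly regular sequences, so the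
property ascends from `R` to a flat `S` at every prime `P` of `S` that is minimal over the
extension of `P ∩ R`, and for finite `S` all primes are of this kind. Over a local ring `R` with
maximal ideal `m`, a prime of `R[X]` above `m` other than `m R[X]` is generated by `m` and a monic
polynomial `f`; as `R[X] / (f)` is free over `R`, prepending `f` to a weakly regular sequence in
`R` gives one in `R[X]`.
-/

open IsLocalRing RingTheory.Sequence

section LocalRings

variable {R S : Type*} [CommRing R] [CommRing S]

theorem ringKrullDim_quotient_eq_zero_iff_maximalIdeal_le_radical [IsLocalRing R] {I : Ideal R}
    (hI : I ≤ maximalIdeal R) : ringKrullDim (R ⧸ I) = 0 ↔ maximalIdeal R ≤ I.radical := by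
  have hI_ne_top : I ≠ ⊤ := ne_top_of_le_ne_top (maximalIdeal.isMaximal R).ne_top hI
  have : Nontrivial (R ⧸ I) := Ideal.Quotient.nontrivial_iff.mpr hI_ne_top
  rw [← ringKrullDimZero_iff_ringKrullDim_eq_zero,
    Ideal.krullDimLE_zero_quotient_iff_forall_minimalPrimes_isMaximal,
    ← Ideal.sInf_minimalPrimes, le_sInf_iff]
  refine forall₂_congr fun J hJ ↦ ⟨fun hmax ↦ (eq_maximalIdeal hmax).ge, fun hle ↦ ?_⟩
  rw [← hle.antisymm (le_maximalIdeal hJ.1.1.ne_top)]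
  exact maximalIdeal.isMaximal R

theorem isCohenMacaulayLocalRing_iff [IsLocalRing R] [IsNoetherianRing R] :
    IsCohenMacaulayLocalRing R ↔ ∃ rs : List R, (∀ r ∈ rs, r ∈ maximalIdeal R) ∧
      IsWeaklyRegular R rs ∧ maximalIdeal R ≤ (Ideal.ofList rs).radical := by
  refine (and_iff_right ‹_›).trans <| exists_congr fun rs ↦ and_congr_right fun hmem ↦ ?_
  have hle : Ideal.ofList rs ≤ maximalIdeal R := Ideal.span_le.mpr hmem
  have dim_quotient (hreg : IsRegular R rs) :
      ringKrullDim R = rs.length ↔ maximalIdeal R ≤ (Ideal.ofList rs).radical := by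
    rw [← ringKrullDim_quotient_eq_zero_iff_maximalIdeal_le_radical hle,
      ← ringKrullDim_add_length_eq_ringKrullDim_of_isRegular rs hreg,
      ← ENat.WithBot.add_natCast_cancel (b := 0) (c := rs.length), zero_add]
  exact ⟨fun ⟨hreg, hdim⟩ ↦ ⟨hreg.toIsWeaklyRegular, (dim_quotient hreg).mp hdim⟩,
    fun ⟨hreg, hrad⟩ ↦
      have hreg := IsRegular.of_isWeaklyRegular_of_mem_maximalIdeal R hmem hreg
      ⟨hreg, (dim_quotient hreg).mpr hrad⟩⟩

theorem isCohenMacaulayLocalRing_of_isArtinianRing [IsLocalRing R] [IsArtinianRing R] :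
    IsCohenMacaulayLocalRing R :=
  isCohenMacaulayLocalRing_iff.mpr
    ⟨[], by simp, .nil R R, by
      rw [Ideal.ofList_nil]; exact (Ring.KrullDimLE.nilradical_eq_maximalIdeal R).ge⟩

theorem isCohenMacaulayLocalRing_of_flat_of_isWeaklyRegular [IsLocalRing S] [IsNoetherianRing S]
    [Algebra R S] [Module.Flat R S] {rs : List R} (hreg : IsWeaklyRegular R rs)
    (hle : (Ideal.ofList rs).map (algebraMap R S) ≤ maximalIdeal S)
    (hrad : maximalIdeal S ≤ ((Ideal.ofList rs).map (algebraMap R S)).radical) :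
    IsCohenMacaulayLocalRing S := by
  rw [Ideal.map_ofList] at hle hrad
  exact isCohenMacaulayLocalRing_iff.mpr
    ⟨rs.map (algebraMap R S), fun r hr ↦ hle (Ideal.subset_span hr), hreg.of_flat, hrad⟩

theorem IsCohenMacaulayLocalRing.of_flat [IsLocalRing R] [IsLocalRing S] [IsNoetherianRing S]
    [Algebra R S] [IsLocalHom (algebraMap R S)] [Module.Flat R S]
    (hR : IsCohenMacaulayLocalRing R)
    (hrad : maximalIdeal S ≤ ((maximalIdeal R).map (algebraMap R S)).radical) :
    IsCohenMacaulayLocalRing S := by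
  have := hR.1
  obtain ⟨rs, hmem, hreg, hrs⟩ := isCohenMacaulayLocalRing_iff.mp hR
  refine isCohenMacaulayLocalRing_of_flat_of_isWeaklyRegular hreg ?_ ?_
  · exact (Ideal.map_mono (Ideal.span_le.mpr hmem)).trans
      (((local_hom_TFAE (algebraMap R S)).out 0 2).mp ‹_›)
  · calc maximalIdeal S
        ≤ ((maximalIdeal R).map (algebraMap R S)).radical := hrad
      _ ≤ ((Ideal.ofList rs).radical.map (algebraMap R S)).radical :=
          Ideal.radical_mono (Ideal.map_mono hrs)
      _ ≤ ((Ideal.ofList rs).map (algebraMap R S)).radical :=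
          Ideal.radical_le_radical_iff.mpr (Ideal.map_radical_le _)

theorem IsCohenMacaulayLocalRing.of_ringEquiv [IsLocalRing R] [IsLocalRing S]
    (hR : IsCohenMacaulayLocalRing R) (e : R ≃+* S) : IsCohenMacaulayLocalRing S := by
  have := hR.1
  have : IsNoetherianRing S := isNoetherianRing_of_ringEquiv R e
  algebraize [e.toRingHom]
  have : IsLocalHom (algebraMap R S) := inferInstanceAs (IsLocalHom (e : R →+* S))
  have : Module.Flat R S :=
    .of_linearEquiv (AlgEquiv.ofRingEquiv (f := e) fun _ ↦ rfl).symm.toLinearEquiv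
  exact hR.of_flat ((IsLocalRing.map_ringEquiv_maximalIdeal e).ge.trans Ideal.le_radical)

end LocalRings

section CohenMacaulayRings

open scoped Polynomial Pointwise

variable {R S : Type*} [CommRing R] [CommRing S]

theorem isCohenMacaulayRing_of_isArtinianRing [IsArtinianRing R] : IsCohenMacaulayRing R :=
  ⟨inferInstance, fun P _ ↦
    have : IsArtinianRing (Localization.AtPrime P) :=
      IsArtinianRing.localization_artinian P.primeCompl _
    isCohenMacaulayLocalRing_of_isArtinianRing⟩

theorem IsCohenMacaulayRing.isCohenMacaulayLocalRing_of_mem_minimalPrimes [IsNoetherianRing S]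
    [Algebra R S] [Module.Flat R S] (hR : IsCohenMacaulayRing R) (P : Ideal S) [P.IsPrime]
    (hP : P ∈ ((P.under R).map (algebraMap R S)).minimalPrimes) :
    IsCohenMacaulayLocalRing (Localization.AtPrime P) := by
  let := Localization.AtPrime.algebraOfLiesOver (P.under R) P
  have : IsLocalHom (algebraMap (Localization.AtPrime (P.under R)) (Localization.AtPrime P)) :=
    Localization.isLocalHom_localRingHom (P.under R) P (algebraMap R S) Ideal.LiesOver.over
  have : IsNoetherianRing (Localization.AtPrime P) :=
    IsLocalization.isNoetherianRing P.primeCompl _ ‹_›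
  refine (hR.2 (P.under R) inferInstance).of_flat ?_
  rw [← Localization.AtPrime.map_eq_maximalIdeal, ← Localization.AtPrime.map_eq_maximalIdeal,
    Ideal.map_map, ← IsScalarTower.algebraMap_eq,
    IsScalarTower.algebraMap_eq R S (Localization.AtPrime P), ← Ideal.map_map,
    IsLocalization.AtPrime.radical_map_of_mem_minimalPrimes _ P _ hP]

theorem IsCohenMacaulayRing.of_finite_flat [Algebra R S] [Module.Finite R S] [Module.Flat R S]
    (hR : IsCohenMacaulayRing R) : IsCohenMacaulayRing S :=
  have := hR.1
  have : IsNoetherianRing S := .of_finite R S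
  ⟨this, fun P _ ↦ hR.isCohenMacaulayLocalRing_of_mem_minimalPrimes P
    (Ideal.IsIntegral.mem_minimalPrimes_map_under P)⟩

theorem IsCohenMacaulayRing.of_ringEquiv (hR : IsCohenMacaulayRing R) (e : R ≃+* S) :
    IsCohenMacaulayRing S := by
  algebraize [(e : R →+* S)]
  let eₗ : R ≃ₗ[R] S := (AlgEquiv.ofRingEquiv (f := e) fun _ ↦ rfl).toLinearEquiv
  have := Module.Finite.equiv eₗ
  have := Module.Flat.of_linearEquiv eₗ.symm
  exact hR.of_finite_flat

theorem isWeaklyRegular_cons_map_algebraMap [Algebra R S] {x : S} {rs : List R}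
    (hx : IsSMulRegular S x) [Module.Flat R (S ⧸ Ideal.span {x})] (hrs : IsWeaklyRegular R rs) :
    IsWeaklyRegular S (x :: rs.map (algebraMap R S)) := by
  have span_eq : (Ideal.span {x} : Submodule S S) = x • (⊤ : Ideal S) := by
    simp [← Submodule.ideal_span_singleton_smul]
  refine .cons hx ((Submodule.quotEquivOfEq _ _ span_eq).isWeaklyRegular_congr _ |>.mp ?_)
  rw [← isWeaklyRegular_map_algebraMap_iff (S ⧸ Ideal.span {x}), List.map_map]
  exact hrs.of_flat

theorem isWeaklyRegular_monic_cons_map_C {f : R[X]} (hf : f.Monic) {rs : List R}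
    (hrs : IsWeaklyRegular R rs) : IsWeaklyRegular R[X] (f :: rs.map Polynomial.C) := by
  have : Module.Free R (R[X] ⧸ Ideal.span {f}) := hf.free_quotient
  exact isWeaklyRegular_cons_map_algebraMap hf.isRegular.left hrs

theorem isCohenMacaulayLocalRing_localization_of_isWeaklyRegular [IsNoetherianRing R] (P : Ideal R)
    [P.IsPrime] {rs : List R} (hreg : IsWeaklyRegular R rs) (hle : Ideal.ofList rs ≤ P)
    (hrad : P ≤ (Ideal.ofList rs).radical) :
    IsCohenMacaulayLocalRing (Localization.AtPrime P) := by
  have : IsNoetherianRing (Localization.AtPrime P) :=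
    IsLocalization.isNoetherianRing P.primeCompl _ ‹_›
  refine isCohenMacaulayLocalRing_of_flat_of_isWeaklyRegular hreg ?_ ?_ <;>
    rw [← Localization.AtPrime.map_eq_maximalIdeal]
  · exact Ideal.map_mono hle
  · exact (Ideal.map_mono hrad).trans (Ideal.map_radical_le _)

theorem IsCohenMacaulayLocalRing.localization_polynomial [IsLocalRing R]
    (hR : IsCohenMacaulayLocalRing R) (P : Ideal R[X]) [P.IsPrime]
    (hP : P.comap Polynomial.C = maximalIdeal R) :
    IsCohenMacaulayLocalRing (Localization.AtPrime P) := by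
  have := hR.1
  obtain ⟨rs, hmem, hreg, hrs⟩ := isCohenMacaulayLocalRing_iff.mp hR
  have map_le : (Ideal.ofList rs).map Polynomial.C ≤ P :=
    Ideal.map_le_iff_le_comap.mpr (hP ▸ Ideal.span_le.mpr hmem)
  have le_radical : (P.comap Polynomial.C).map Polynomial.C ≤
      ((Ideal.ofList rs).map Polynomial.C).radical :=
    hP ▸ (Ideal.map_mono hrs).trans (Ideal.map_radical_le _)
  by_cases hPC : P = (P.comap Polynomial.C).map Polynomial.C
  · refine isCohenMacaulayLocalRing_localization_of_isWeaklyRegular P (rs := rs.map Polynomial.C)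
      hreg.of_flat ?_ ?_ <;> rw [← Ideal.map_ofList]
    exacts [map_le, hPC.trans_le le_radical]
  · have hmax : (P.comap Polynomial.C).IsMaximal := hP ▸ maximalIdeal.isMaximal R
    obtain ⟨f, hf, hPf⟩ := Polynomial.exists_monic_span_sup_map_eq R P hmax hPC
    refine isCohenMacaulayLocalRing_localization_of_isWeaklyRegular P
      (isWeaklyRegular_monic_cons_map_C hf hreg) ?_ ?_ <;>
      rw [Ideal.ofList_cons, ← Ideal.map_ofList]
    · exact sup_le (le_sup_right.trans hPf.ge) map_le
    · exact hPf.trans_le (sup_le (le_radical.trans (Ideal.radical_mono le_sup_right))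
        (le_sup_left.trans Ideal.le_radical))

theorem isCohenMacaulayLocalRing_of_localization_map (M : Submonoid R) [Algebra R S]
    [IsLocalization M S] (P : Ideal R) [P.IsPrime] [(P.map (algebraMap R S)).IsPrime]
    (hdisj : Disjoint (M : Set R) P)
    (h : IsCohenMacaulayLocalRing (Localization.AtPrime (P.map (algebraMap R S)))) :
    IsCohenMacaulayLocalRing (Localization.AtPrime P) := by
  have := IsLocalization.isLocalization_isLocalization_atPrime_isLocalization M
    (Localization.AtPrime (P.map (algebraMap R S))) (P.map (algebraMap R S))
  simp_rw [IsLocalization.under_map_of_isPrime_disjoint M S _ hdisj] at this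
  exact h.of_ringEquiv (IsLocalization.algEquiv P.primeCompl _ _).toRingEquiv

attribute [local instance] Polynomial.algebra Polynomial.isLocalization in
theorem IsCohenMacaulayRing.polynomial (hR : IsCohenMacaulayRing R) :
    IsCohenMacaulayRing R[X] := by
  have := hR.1
  refine ⟨inferInstance, fun P _ ↦ ?_⟩
  let q : Ideal R := P.comap Polynomial.C
  let Rq := Localization.AtPrime q
  let M : Submonoid R[X] := q.primeCompl.map Polynomial.C
  have hdisj : Disjoint (M : Set R[X]) P := by
    rw [Submonoid.coe_map, Set.disjoint_image_left]
    exact disjoint_compl_left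
  let P' : Ideal Rq[X] := P.map (algebraMap R[X] Rq[X])
  have : P'.IsPrime := IsLocalization.isPrime_of_isPrime_disjoint M _ P ‹_› hdisj
  have map_le : (maximalIdeal Rq).map Polynomial.C ≤ P' := calc
    (maximalIdeal Rq).map Polynomial.C
        = (q.map (algebraMap R Rq)).map (algebraMap Rq Rq[X]) := by
          rw [Localization.AtPrime.map_eq_maximalIdeal, Polynomial.algebraMap_eq]
    _ = (q.map (algebraMap R R[X])).map (algebraMap R[X] Rq[X]) := by
          simp_rw [Ideal.map_map, ← IsScalarTower.algebraMap_eq]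
    _ ≤ P' := Ideal.map_mono Ideal.map_comap_le
  have comap_eq : P'.comap Polynomial.C = maximalIdeal Rq :=
    ((maximalIdeal.isMaximal Rq).eq_of_le Ideal.IsPrime.ne_top'
      (Ideal.map_le_iff_le_comap.mp map_le)).symm
  exact isCohenMacaulayLocalRing_of_localization_map M P hdisj
    ((hR.2 q inferInstance).localization_polynomial P' comap_eq)

end CohenMacaulayRings

theorem IsCohenMacaulayRing.mvPolynomial {R : Type*} [CommRing R] (hR : IsCohenMacaulayRing R)
    (ι : Type*) [Finite ι] : IsCohenMacaulayRing (MvPolynomial ι R) := by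
  induction ι using Finite.induction_empty_option with
  | of_equiv e ih => exact ih.of_ringEquiv (renameEquiv R e).toRingEquiv
  | h_empty => exact hR.of_ringEquiv (isEmptyRingEquiv R PEmpty).symm
  | h_option ih => exact ih.polynomial.of_ringEquiv (optionEquivLeft R _).symm.toRingEquiv

/-- The cubic ring that Delone and Faddeev attach to the binary cubic form
`a x³ + b x² y + c x y² + d y³` over `B`: the free `B`-module on `1, ω, θ` with multiplication
`ω² = -ac - bω + aθ`, `ωθ = -ad`, `θ² = -bd - dω + cθ`. An element is stored as its three
coordinates. -/
@[ext]
structure CubicRing {B : Type*} (a b c d : B) where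
  /-- The coordinate along `1`. -/
  coeffOne : B
  /-- The coordinate along `ω`. -/
  coeffOmega : B
  /-- The coordinate along `θ`. -/
  coeffTheta : B

namespace CubicRing

variable {B S : Type*} [CommRing B] [CommRing S] {a b c d : B}

@[simps]
instance : Zero (CubicRing a b c d) := ⟨⟨0, 0, 0⟩⟩

@[simps]
instance : One (CubicRing a b c d) := ⟨⟨1, 0, 0⟩⟩

@[simps]
instance : Add (CubicRing a b c d) :=
  ⟨fun u v ↦ ⟨u.coeffOne + v.coeffOne, u.coeffOmega + v.coeffOmega, u.coeffTheta + v.coeffTheta⟩⟩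

@[simps]
instance : Neg (CubicRing a b c d) := ⟨fun u ↦ ⟨-u.coeffOne, -u.coeffOmega, -u.coeffTheta⟩⟩

@[simps]
instance : Mul (CubicRing a b c d) where
  mul u v :=
    { coeffOne := u.coeffOne * v.coeffOne - a * c * (u.coeffOmega * v.coeffOmega)
        - a * d * (u.coeffOmega * v.coeffTheta + u.coeffTheta * v.coeffOmega)
        - b * d * (u.coeffTheta * v.coeffTheta)
      coeffOmega := u.coeffOne * v.coeffOmega + u.coeffOmega * v.coeffOne
        - b * (u.coeffOmega * v.coeffOmega) - d * (u.coeffTheta * v.coeffTheta)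
      coeffTheta := u.coeffOne * v.coeffTheta + u.coeffTheta * v.coeffOne
        + a * (u.coeffOmega * v.coeffOmega) + c * (u.coeffTheta * v.coeffTheta) }

@[simps]
instance : SMul B (CubicRing a b c d) :=
  ⟨fun r u ↦ ⟨r * u.coeffOne, r * u.coeffOmega, r * u.coeffTheta⟩⟩

instance : CommRing (CubicRing a b c d) where
  add_assoc _ _ _ := by
    ext <;> simp only [add_coeffOne, add_coeffOmega, add_coeffTheta] <;> ring
  zero_add _ := by ext <;> simp
  add_zero _ := by ext <;> simp
  add_comm _ _ := by
    ext <;> simp only [add_coeffOne, add_coeffOmega, add_coeffTheta] <;> ring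
  neg_add_cancel _ := by ext <;> simp
  mul_assoc _ _ _ := by
    ext <;> simp only [mul_coeffOne, mul_coeffOmega, mul_coeffTheta] <;> ring
  one_mul _ := by ext <;> simp
  mul_one _ := by ext <;> simp
  zero_mul _ := by ext <;> simp
  mul_zero _ := by ext <;> simp
  left_distrib _ _ _ := by
    ext <;> simp only [add_coeffOne, add_coeffOmega, add_coeffTheta, mul_coeffOne, mul_coeffOmega,
      mul_coeffTheta] <;> ring
  right_distrib _ _ _ := by
    ext <;> simp only [add_coeffOne, add_coeffOmega, add_coeffTheta, mul_coeffOne, mul_coeffOmega,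
      mul_coeffTheta] <;> ring
  mul_comm _ _ := by
    ext <;> simp only [mul_coeffOne, mul_coeffOmega, mul_coeffTheta] <;> ring
  nsmul := nsmulRec
  zsmul := zsmulRec

instance : Algebra B (CubicRing a b c d) where
  algebraMap :=
    { toFun r := ⟨r, 0, 0⟩
      map_one' := rfl
      map_zero' := rfl
      map_mul' _ _ := by ext <;> simp
      map_add' _ _ := by ext <;> simp }
  commutes' _ _ := mul_comm _ _
  smul_def' _ _ := by ext <;> simp

/-- The coordinates of an element of a cubic ring along the basis `1, ω, θ`. -/
def coordEquiv : CubicRing a b c d ≃ₗ[B] B × B × B where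
  toFun u := (u.coeffOne, u.coeffOmega, u.coeffTheta)
  invFun p := ⟨p.1, p.2.1, p.2.2⟩
  map_add' _ _ := rfl
  map_smul' _ _ := rfl

instance : Module.Free B (CubicRing a b c d) := .of_equiv coordEquiv.symm

instance : Module.Finite B (CubicRing a b c d) := .equiv coordEquiv.symm

variable (a b c d) in
/-- The basis element `ω` of a cubic ring. -/
@[simps]
def omega : CubicRing a b c d := ⟨0, 1, 0⟩

variable (a b c d) in
/-- The basis element `θ` of a cubic ring. -/
@[simps]
def theta : CubicRing a b c d := ⟨0, 0, 1⟩

@[simp]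
theorem coeffOne_algebraMap (r : B) : (algebraMap B (CubicRing a b c d) r).coeffOne = r := rfl

@[simp]
theorem coeffOmega_algebraMap (r : B) : (algebraMap B (CubicRing a b c d) r).coeffOmega = 0 := rfl

@[simp]
theorem coeffTheta_algebraMap (r : B) : (algebraMap B (CubicRing a b c d) r).coeffTheta = 0 := rfl

theorem eq_algebraMap_add (u : CubicRing a b c d) :
    u = algebraMap B _ u.coeffOne + algebraMap B _ u.coeffOmega * omega a b c d
      + algebraMap B _ u.coeffTheta * theta a b c d := by
  ext <;> simp

theorem ringHom_ext {f g : CubicRing a b c d →+* S}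
    (hB : f.comp (algebraMap B _) = g.comp (algebraMap B _))
    (hω : f (omega a b c d) = g (omega a b c d)) (hθ : f (theta a b c d) = g (theta a b c d)) :
    f = g := by
  ext u
  have hB (r : B) := congr($hB r)
  simp only [RingHom.comp_apply] at hB
  rw [eq_algebraMap_add u]
  simp only [map_add, map_mul, hB, hω, hθ]

/-- The universal property of a cubic ring: a ring homomorphism out of it is a homomorphism out of
the base together with images of `ω` and `θ` that satisfy the multiplication table. -/
def lift (φ : B →+* S) (ω θ : S) (hωω : ω * ω = -(φ a * φ c) - φ b * ω + φ a * θ)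
    (hωθ : ω * θ = -(φ a * φ d)) (hθθ : θ * θ = -(φ b * φ d) - φ d * ω + φ c * θ) :
    CubicRing a b c d →+* S where
  toFun u := φ u.coeffOne + φ u.coeffOmega * ω + φ u.coeffTheta * θ
  map_one' := by simp
  map_zero' := by simp
  map_add' u v := by
    simp only [add_coeffOne, map_add, add_coeffOmega, add_coeffTheta]
    ring
  map_mul' u v := by
    simp only [map_mul, mul_coeffOne, map_sub, map_add, mul_coeffOmega, mul_coeffTheta]
    linear_combination -(φ u.coeffOmega * φ v.coeffOmega) * hωω
      - (φ u.coeffOmega * φ v.coeffTheta + φ u.coeffTheta * φ v.coeffOmega) * hωθ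
      - (φ u.coeffTheta * φ v.coeffTheta) * hθθ

section lift

variable {φ : B →+* S} {ω θ : S} (hωω : ω * ω = -(φ a * φ c) - φ b * ω + φ a * θ)
  (hωθ : ω * θ = -(φ a * φ d)) (hθθ : θ * θ = -(φ b * φ d) - φ d * ω + φ c * θ)

@[simp]
theorem lift_algebraMap (r : B) : lift φ ω θ hωω hωθ hθθ (algebraMap B _ r) = φ r := by
  simp [lift]

@[simp]
theorem lift_omega : lift φ ω θ hωω hωθ hθθ (omega a b c d) = ω := by
  simp [lift]

@[simp]
theorem lift_theta : lift φ ω θ hωω hωθ hθθ (theta a b c d) = θ := by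
  simp [lift]

end lift

end CubicRing

/-- The determinantal ring of the `2 × 2` minors of the generic matrix with rows
`(X 0, X 1, X 2)` and `(X 3, X 4, X 5)`. -/
abbrev MinorsRing (A : Type*) [CommRing A] : Type _ :=
  MvPolynomial (Fin 6) A ⧸ Ideal.span
    ({X 0 * X 4 - X 1 * X 3, X 1 * X 5 - X 2 * X 4, X 2 * X 3 - X 0 * X 5} :
      Set (MvPolynomial (Fin 6) A))

/-- The cubic ring of the generic binary cubic form, whose coefficients `a, b, c, d` are the four
variables. -/
abbrev GenericCubicRing (A : Type*) [CommRing A] : Type _ :=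
  CubicRing (X 0 : MvPolynomial (Fin 4) A) (X 1) (X 2) (X 3)

namespace MinorsRing

variable {A S : Type*} [CommRing A] [CommRing S]

variable (A) in
/-- The image of the variable `X i` in the determinantal ring. -/
noncomputable def var (i : Fin 6) : MinorsRing A := Ideal.Quotient.mk _ (X i)

theorem var_zero_mul_var_four : var A 0 * var A 4 = var A 1 * var A 3 :=
  Ideal.Quotient.eq.mpr (Ideal.subset_span (by simp))

theorem var_one_mul_var_five : var A 1 * var A 5 = var A 2 * var A 4 :=
  Ideal.Quotient.eq.mpr (Ideal.subset_span (by simp))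

theorem var_two_mul_var_three : var A 2 * var A 3 = var A 0 * var A 5 :=
  Ideal.Quotient.eq.mpr (Ideal.subset_span (by simp))

/-- The universal property of the determinantal ring: a homomorphism out of it is a homomorphism
out of the coefficient ring together with a `2 × 3` matrix all of whose minors vanish. -/
noncomputable def lift (φ : A →+* S) (x : Fin 6 → S) (h₀ : x 0 * x 4 = x 1 * x 3)
    (h₁ : x 1 * x 5 = x 2 * x 4) (h₂ : x 2 * x 3 = x 0 * x 5) : MinorsRing A →+* S :=
  Ideal.Quotient.lift _ (eval₂Hom φ x) fun p hp ↦ by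
    rw [← RingHom.mem_ker]
    refine Ideal.span_le.mpr ?_ hp
    rintro _ (rfl | rfl | rfl) <;> simp [RingHom.mem_ker, h₀, h₁, h₂]

theorem ringHom_ext {f g : MinorsRing A →+* S}
    (hA : f.comp (algebraMap A _) = g.comp (algebraMap A _))
    (hvar : ∀ i, f (var A i) = g (var A i)) : f = g :=
  Ideal.Quotient.ringHom_ext (MvPolynomial.ringHom_ext (fun r ↦ congr($hA r)) hvar)

section lift

variable {φ : A →+* S} {x : Fin 6 → S} (h₀ : x 0 * x 4 = x 1 * x 3)
  (h₁ : x 1 * x 5 = x 2 * x 4) (h₂ : x 2 * x 3 = x 0 * x 5)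

@[simp]
theorem lift_algebraMap (r : A) : lift φ x h₀ h₁ h₂ (algebraMap A _ r) = φ r :=
  eval₂Hom_C φ x r

@[simp]
theorem lift_var (i : Fin 6) : lift φ x h₀ h₁ h₂ (var A i) = x i :=
  eval₂Hom_X' φ x i

end lift

variable (A)

/-- The homomorphism that sends the generic matrix to the one with rows `(a, b + ω, θ)` and
`(ω, θ - c, -d)`. -/
noncomputable def toGenericCubicRing : MinorsRing A →+* GenericCubicRing A :=
  let ι := algebraMap (MvPolynomial (Fin 4) A) (GenericCubicRing A)
  let ω : GenericCubicRing A := .omega _ _ _ _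
  let θ : GenericCubicRing A := .theta _ _ _ _
  lift (ι.comp C) ![ι (X 0), ι (X 1) + ω, θ, ω, θ - ι (X 2), -ι (X 3)]
    (by ext <;> simp [ι, ω, θ, sub_eq_add_neg]) (by ext <;> simp [ι, ω, θ, sub_eq_add_neg])
    (by ext <;> simp [ι, ω, θ])

/-- The inverse of `toGenericCubicRing`. -/
noncomputable def ofGenericCubicRing : GenericCubicRing A →+* MinorsRing A :=
  CubicRing.lift
    (eval₂Hom (algebraMap A _) ![var A 0, var A 1 - var A 3, var A 2 - var A 4, -var A 5])
    (var A 3) (var A 2)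
    (by
      simp only [eval₂Hom_X', Matrix.cons_val_zero, Matrix.cons_val_one, Matrix.cons_val]
      linear_combination (-1) * var_zero_mul_var_four (A := A))
    (by
      simp only [eval₂Hom_X', Matrix.cons_val_zero, Matrix.cons_val]
      linear_combination var_two_mul_var_three (A := A))
    (by
      simp only [eval₂Hom_X', Matrix.cons_val_zero, Matrix.cons_val_one, Matrix.cons_val]
      linear_combination (-1) * var_one_mul_var_five (A := A))

/-- The determinantal ring is the cubic ring of the generic binary cubic form. -/
noncomputable def equivGenericCubicRing : GenericCubicRing A ≃+* MinorsRing A :=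
  .ofRingHom (ofGenericCubicRing A) (toGenericCubicRing A)
    (by
      refine ringHom_ext ?_ fun i ↦ ?_
      · ext; simp [ofGenericCubicRing, toGenericCubicRing]
      · fin_cases i <;> simp [ofGenericCubicRing, toGenericCubicRing])
    (by
      refine CubicRing.ringHom_ext (MvPolynomial.ringHom_ext ?_ fun i ↦ ?_) ?_ ?_
      · simp [ofGenericCubicRing, toGenericCubicRing]
      · fin_cases i <;> simp [ofGenericCubicRing, toGenericCubicRing]
      · simp [ofGenericCubicRing, toGenericCubicRing]
      · simp [ofGenericCubicRing, toGenericCubicRing])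

end MinorsRing

theorem minors_ring_cohenMacaulay_general {A : Type*} [CommRing A] (hA : IsCohenMacaulayRing A) :
    IsCohenMacaulayRing (MinorsRing A) :=
  have : IsCohenMacaulayRing (GenericCubicRing A) := (hA.mvPolynomial (Fin 4)).of_finite_flat
  this.of_ringEquiv (MinorsRing.equivGenericCubicRing A)

/-- The ring `k[x₁,x₂,x₃,y₁,y₂,y₃]/(x₁y₂-x₂y₁, x₂y₃-x₃y₂, x₃y₁-x₁y₃)` is Cohen-Macaulay.
Variables `0,1,2` are `x₁,x₂,x₃` and `3,4,5` are `y₁,y₂,y₃`. -/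
theorem minors_ring_cohenMacaulay {k : Type*} [Field k] :
    IsCohenMacaulayRing (MvPolynomial (Fin 6) k ⧸
      Ideal.span ({X 0 * X 4 - X 1 * X 3,
                   X 1 * X 5 - X 2 * X 4,
                   X 2 * X 3 - X 0 * X 5} : Set (MvPolynomial (Fin 6) k))) :=
  minors_ring_cohenMacaulay_general isCohenMacaulayRing_of_isArtinianRing
end
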